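/- arXiv:2008.11969 — 6 statements merged into one kernel-verified Lean document; each statement's English description precedes it below -/
import Mathlib

section
/- Let H ⊆ ℝⁿ be a nonempty compact convex set, let F: ℝⁿ → ℝⁿ be strictly monotone, let h* solve VI(F, H), and let c > 0. Then for every h̄ ∈ ℝⁿ with h̄ ≠ h*, setting h̃ = Π_H(h̄), one has −2(h̄ − h*)ᵀ(F(h̄) + c(h̄ − h̃)) < 2‖h̄ − h̃‖·‖F(h*)‖ − 2c‖h̄ − h̃‖². -/
open RealInnerProductSpace

/-- Lie-derivative bound in the penalty-driven analysis under strict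
monotonicity: for `h̄ ≠ h*` and `h̃ = Π_H(h̄)`,
`-2⟪h̄ - h*, F h̄ + c (h̄ - h̃)⟫ < 2‖h̄ - h̃‖ ‖F h*‖ - 2 c ‖h̄ - h̃‖²`. -/
theorem penalty_lie_derivative_strict {n : ℕ}
    (H : Set (EuclideanSpace ℝ (Fin n)))
    (hne : H.Nonempty) (hcompact : IsCompact H) (hconv : Convex ℝ H)
    (F : EuclideanSpace ℝ (Fin n) → EuclideanSpace ℝ (Fin n))
    (hmono : ∀ x y, x ≠ y → 0 < ⟪F x - F y, x - y⟫)
    (hstar : EuclideanSpace ℝ (Fin n))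
    (hsol : hstar ∈ H ∧ ∀ h ∈ H, 0 ≤ ⟪h - hstar, F hstar⟫)
    (c : ℝ) (hc : 0 < c)
    (hbar : EuclideanSpace ℝ (Fin n)) (hbar_ne : hbar ≠ hstar)
    (htil : EuclideanSpace ℝ (Fin n))
    (hproj : htil ∈ H ∧ ∀ y ∈ H, ‖hbar - htil‖ ≤ ‖hbar - y‖) :
    -2 * ⟪hbar - hstar, F hbar + c • (hbar - htil)⟫ <
      2 * ‖hbar - htil‖ * ‖F hstar‖ - 2 * c * ‖hbar - htil‖ ^ 2 := by
  have hinf : ‖hbar - htil‖ = ⨅ w : H, ‖hbar - w‖ := by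
    haveI : Nonempty H := hne.to_subtype
    apply le_antisymm
    · exact le_ciInf fun w => hproj.2 w w.2
    · exact ciInf_le (f := fun w : H => ‖hbar - w‖)
        ⟨0, by rintro _ ⟨w, rfl⟩; exact norm_nonneg _⟩ ⟨htil, hproj.1⟩
  have h1 : ⟪hbar - htil, hstar - htil⟫ ≤ 0 :=
    (norm_eq_iInf_iff_real_inner_le_zero hconv hproj.1).1 hinf hstar hsol.1
  have h2 := hsol.2 htil hproj.1
  have h3 := hmono hbar hstar hbar_ne
  have h4 := neg_le_of_abs_le (abs_real_inner_le_norm (hbar - htil) (F hstar))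
  have e1 : ⟪hbar - hstar, F hbar⟫ = ⟪F hbar - F hstar, hbar - hstar⟫
      + ⟪hbar - htil, F hstar⟫ + ⟪htil - hstar, F hstar⟫ := by
    rw [real_inner_comm, add_assoc, ← inner_add_left, sub_add_sub_cancel, inner_sub_left,
      real_inner_comm (hbar - hstar) (F hstar)]
    ring
  have e2 : ⟪hbar - hstar, hbar - htil⟫
      = ‖hbar - htil‖ ^ 2 - ⟪hbar - htil, hstar - htil⟫ := by
    rw [← real_inner_self_eq_norm_sq, ← inner_sub_right, sub_sub_sub_cancel_right,
      real_inner_comm]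
  have h5 : c * ⟪hbar - htil, hstar - htil⟫ ≤ 0 := mul_nonpos_of_nonneg_of_nonpos hc.le h1
  rw [inner_add_right, real_inner_smul_right, e1, e2]
  linarith
end

section
/- Let H ⊆ ℝⁿ be a nonempty compact convex set, let F: ℝⁿ → ℝⁿ be strongly monotone with constant c_F > 0, let h* solve VI(F, H), and let c > 0. Then for every h̄ ∈ ℝⁿ, setting h̃ = Π_H(h̄), one has −2(h̄ − h*)ᵀ(F(h̄) + c(h̄ − h̃)) ≤ −2c_F‖h̄ − h*‖² + 2‖h̄ − h̃‖·‖F(h*)‖ − 2c‖h̄ − h̃‖². -/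
open RealInnerProductSpace

/-- Lie-derivative bound in the penalty-driven analysis under strong
monotonicity: for any `h̄` and `h̃ = Π_H(h̄)`,
`-2⟪h̄ - h*, F h̄ + c (h̄ - h̃)⟫ ≤ -2 c_F ‖h̄ - h*‖² + 2‖h̄ - h̃‖ ‖F h*‖ - 2 c ‖h̄ - h̃‖²`. -/
theorem penalty_lie_derivative_strong {n : ℕ}
    (H : Set (EuclideanSpace ℝ (Fin n)))
    (hne : H.Nonempty) (hcompact : IsCompact H) (hconv : Convex ℝ H)
    (F : EuclideanSpace ℝ (Fin n) → EuclideanSpace ℝ (Fin n))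
    (cF : ℝ) (hcF : 0 < cF)
    (hmono : ∀ x y, cF * ‖x - y‖ ^ 2 ≤ ⟪F x - F y, x - y⟫)
    (hstar : EuclideanSpace ℝ (Fin n))
    (hsol : hstar ∈ H ∧ ∀ h ∈ H, 0 ≤ ⟪h - hstar, F hstar⟫)
    (c : ℝ) (hc : 0 < c)
    (hbar : EuclideanSpace ℝ (Fin n))
    (htil : EuclideanSpace ℝ (Fin n))
    (hproj : htil ∈ H ∧ ∀ y ∈ H, ‖hbar - htil‖ ≤ ‖hbar - y‖) :
    -2 * ⟪hbar - hstar, F hbar + c • (hbar - htil)⟫ ≤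
      -2 * cF * ‖hbar - hstar‖ ^ 2
        + 2 * ‖hbar - htil‖ * ‖F hstar‖ - 2 * c * ‖hbar - htil‖ ^ 2 := by
  have : Nonempty H := hne.to_subtype
  have k0 : ‖hbar - htil‖ = ⨅ w : H, ‖hbar - w‖ := by
    apply le_antisymm
    · exact le_ciInf fun w => hproj.2 w w.2
    · exact ciInf_le ⟨0, by rintro _ ⟨w, rfl⟩; exact norm_nonneg _⟩ (⟨htil, hproj.1⟩ : H)
  have k1 := (norm_eq_iInf_iff_real_inner_le_zero hconv hproj.1).1 k0 hstar hsol.1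
  have k2 := hsol.2 htil hproj.1
  have k3 := hmono hbar hstar
  have k4 := (abs_le.1 (abs_real_inner_le_norm (hbar - htil) (F hstar))).1
  obtain ⟨e, he⟩ : ∃ e, e = hbar - htil := ⟨_, rfl⟩
  obtain ⟨f, hf⟩ : ∃ f, f = htil - hstar := ⟨_, rfl⟩
  have hd : hbar - hstar = e + f := by rw [he, hf]; abel
  have hf' : hstar - htil = -f := by rw [hf]; abel
  rw [hd] at k3 ⊢
  rw [hf', ← he, inner_neg_right] at k1
  rw [← hf] at k2
  rw [← he] at k4 ⊢
  rw [real_inner_comm, inner_sub_right, inner_add_left e f (F hstar)] at k3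
  have k5 : ⟪e + f, F hbar + c • e⟫ = ⟪e + f, F hbar⟫ + c * (‖e‖ ^ 2 + ⟪e, f⟫) := by
    rw [inner_add_right, inner_smul_right, inner_add_left e f e, real_inner_self_eq_norm_sq,
      real_inner_comm e f]
  rw [k5]
  have k6 : 0 ≤ c * ⟪e, f⟫ := mul_nonneg hc.le (by linarith)
  linarith
end

section
/- Let H ⊆ ℝⁿ be a nonempty compact convex set, let F: ℝⁿ → ℝⁿ be strictly monotone, let h* solve VI(F, H), let d > 0, and set c = d‖F(h*)‖. Then for every h̄ ∈ ℝⁿ with h̄ ≠ h*, setting h̃ = Π_H(h̄), one has −2(h̄ − h*)ᵀ(F(h̄) + c(h̄ − h̃)) < ‖F(h*)‖ / (2d). -/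
open RealInnerProductSpace

/-- Lie-derivative bound in the penalty-driven analysis with penalty constant
`c = d ‖F h*‖`: for `h̄ ≠ h*` and `h̃ = Π_H(h̄)`,
`-2⟪h̄ - h*, F h̄ + c (h̄ - h̃)⟫ < ‖F h*‖ / (2 d)`. -/
theorem penalty_lie_derivative_bound {n : ℕ}
    (H : Set (EuclideanSpace ℝ (Fin n)))
    (hne : H.Nonempty) (hcompact : IsCompact H) (hconv : Convex ℝ H)
    (F : EuclideanSpace ℝ (Fin n) → EuclideanSpace ℝ (Fin n))
    (hmono : ∀ x y, x ≠ y → 0 < ⟪F x - F y, x - y⟫)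
    (hstar : EuclideanSpace ℝ (Fin n))
    (hsol : hstar ∈ H ∧ ∀ h ∈ H, 0 ≤ ⟪h - hstar, F hstar⟫)
    (d : ℝ) (hd : 0 < d) (c : ℝ) (hc : c = d * ‖F hstar‖)
    (hbar : EuclideanSpace ℝ (Fin n)) (hbar_ne : hbar ≠ hstar)
    (htil : EuclideanSpace ℝ (Fin n))
    (hproj : htil ∈ H ∧ ∀ y ∈ H, ‖hbar - htil‖ ≤ ‖hbar - y‖) :
    -2 * ⟪hbar - hstar, F hbar + c • (hbar - htil)⟫ < ‖F hstar‖ / (2 * d) := by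
  obtain ⟨hs, hvi⟩ := hsol
  obtain ⟨ht, hmin⟩ := hproj
  have hinf : ‖hbar - htil‖ = ⨅ w : H, ‖hbar - w‖ := by
    haveI : Nonempty H := hne.to_subtype
    apply le_antisymm
    · exact le_ciInf fun w => hmin w w.2
    · exact ciInf_le (f := fun w : H => ‖hbar - w‖)
        ⟨0, by rintro _ ⟨w, rfl⟩; exact norm_nonneg _⟩ ⟨htil, ht⟩
  have h1 := (norm_eq_iInf_iff_real_inner_le_zero hconv ht).1 hinf hstar hs
  have h2 := hmono hbar hstar hbar_ne
  have h3 := hvi htil ht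
  have h4 : -(‖hbar - htil‖ * ‖F hstar‖) ≤ ⟪hbar - htil, F hstar⟫ :=
    (abs_le.1 (abs_real_inner_le_norm _ _)).1
  have e1 : ⟪hbar - hstar, F hbar⟫ = ⟪F hbar - F hstar, hbar - hstar⟫
      + ⟪htil - hstar, F hstar⟫ + ⟪hbar - htil, F hstar⟫ := by
    rw [real_inner_comm (hbar - hstar) (F hbar - F hstar), add_assoc, ← inner_add_left,
      inner_sub_right, show htil - hstar + (hbar - htil) = hbar - hstar by abel]
    ring
  have e2 : ⟪hbar - hstar, hbar - htil⟫ = ‖hbar - htil‖ ^ 2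
      - ⟪hbar - htil, hstar - htil⟫ := by
    rw [← real_inner_self_eq_norm_sq, ← inner_sub_right, real_inner_comm,
      show hbar - htil - (hstar - htil) = hbar - hstar by abel]
  rw [inner_add_right, real_inner_smul_right, e1, e2]
  set t := ‖hbar - htil‖
  set f := ‖F hstar‖
  have hf : 0 ≤ f := norm_nonneg _
  have hc0 : 0 ≤ c := by rw [hc]; positivity
  have h5 : 0 ≤ c * -⟪hbar - htil, hstar - htil⟫ := mul_nonneg hc0 (by linarith)
  have h6 : f / (2 * d) - 2 * (t * f) + 2 * (c * t ^ 2) = f * (2 * d * t - 1) ^ 2 / (2 * d) := by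
    rw [hc]; field_simp; ring
  have h7 : 0 ≤ f * (2 * d * t - 1) ^ 2 / (2 * d) := by positivity
  nlinarith
end

section
/- Let F: ℝⁿ → ℝⁿ be strictly monotone, let q: ℝⁿ → ℝˢ and l: ℝⁿ → ℝᵗ be affine maps with (constant) Jacobians Dq and Dl, and define H(h, λ, μ) := F(h) + Dqᵀλ + Dlᵀμ. Let (h*, λ*, μ*) ∈ ℝⁿ × ℝˢ × ℝᵗ be a KKT point, i.e., H(h*, λ*, μ*) = 0, l(h*) = 0, q(h*) ≤ 0 componentwise, λ* ≥ 0 componentwise, and (λ*)ᵀq(h*) = 0. Then for all h̄ ∈ ℝⁿ with h̄ ≠ h*, all λ̄ ∈ ℝˢ with λ̄ ≥ 0 componentwise, and all μ̄ ∈ ℝᵗ, one has −2(h̄ − h*)ᵀ H(h̄, λ̄, μ̄) + 2(λ̄ − λ*)ᵀ [q(h̄)]_{λ̄}⁺ + 2(μ̄ − μ*)ᵀ l(h̄) < 0. -/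
open RealInnerProductSpace

/-- Negativity of the Lie derivative of the Lyapunov function in the
multiplier-driven algorithm analysis, under strict monotonicity: at a KKT
point `(h*, λ*, μ*)`, for all `h̄ ≠ h*`, `λ̄ ≥ 0`, `μ̄`:
`-2⟪h̄ - h*, H(h̄, λ̄, μ̄)⟫ + 2⟪λ̄ - λ*, [q h̄]_{λ̄}⁺⟫ + 2⟪μ̄ - μ*, l h̄⟫ < 0`. -/
theorem multiplier_lie_derivative_neg_strict {n s t : ℕ}
    (F : EuclideanSpace ℝ (Fin n) → EuclideanSpace ℝ (Fin n))
    (hmono : ∀ x y, x ≠ y → 0 < ⟪F x - F y, x - y⟫)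
    (Dq : EuclideanSpace ℝ (Fin n) →L[ℝ] EuclideanSpace ℝ (Fin s))
    (q0 : EuclideanSpace ℝ (Fin s))
    (Dl : EuclideanSpace ℝ (Fin n) →L[ℝ] EuclideanSpace ℝ (Fin t))
    (l0 : EuclideanSpace ℝ (Fin t))
    (q : EuclideanSpace ℝ (Fin n) → EuclideanSpace ℝ (Fin s))
    (hq : ∀ h, q h = Dq h + q0)
    (l : EuclideanSpace ℝ (Fin n) → EuclideanSpace ℝ (Fin t))
    (hl : ∀ h, l h = Dl h + l0)
    (H : EuclideanSpace ℝ (Fin n) → EuclideanSpace ℝ (Fin s) →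
      EuclideanSpace ℝ (Fin t) → EuclideanSpace ℝ (Fin n))
    (hH : ∀ h lam mu, H h lam mu =
      F h + ContinuousLinearMap.adjoint Dq lam + ContinuousLinearMap.adjoint Dl mu)
    (hstar : EuclideanSpace ℝ (Fin n)) (lamStar : EuclideanSpace ℝ (Fin s))
    (muStar : EuclideanSpace ℝ (Fin t))
    (hstat : H hstar lamStar muStar = 0)
    (hl0 : l hstar = 0)
    (hq0 : ∀ j, q hstar j ≤ 0)
    (hlamStar : ∀ j, 0 ≤ lamStar j)
    (hcomp : ⟪lamStar, q hstar⟫ = 0)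
    (hbar : EuclideanSpace ℝ (Fin n)) (hbar_ne : hbar ≠ hstar)
    (lamBar : EuclideanSpace ℝ (Fin s)) (hlamBar : ∀ j, 0 ≤ lamBar j)
    (muBar : EuclideanSpace ℝ (Fin t))
    (qplus : EuclideanSpace ℝ (Fin s))
    (hqplus : ∀ j, qplus j = if 0 < lamBar j then q hbar j else max (q hbar j) 0) :
    -2 * ⟪hbar - hstar, H hbar lamBar muBar⟫
      + 2 * ⟪lamBar - lamStar, qplus⟫ + 2 * ⟪muBar - muStar, l hbar⟫ < 0 := by
  have h1 := hmono hbar hstar hbar_ne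
  have e1 : l hbar = Dl (hbar - hstar) := by
    have : l hbar = l hbar - l hstar := by rw [hl0, sub_zero]
    rw [this, hl, hl, map_sub]; abel
  have e2 : Dq (hbar - hstar) = q hbar - q hstar := by
    rw [hq, hq, map_sub]; abel
  have e3 : H hbar lamBar muBar = (F hbar - F hstar)
      + ContinuousLinearMap.adjoint Dq (lamBar - lamStar)
      + ContinuousLinearMap.adjoint Dl (muBar - muStar) := by
    have : H hbar lamBar muBar = H hbar lamBar muBar - H hstar lamStar muStar := by
      rw [hstat, sub_zero]
    rw [this, hH, hH, map_sub, map_sub]; abel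
  have e4 : ⟪hbar - hstar, H hbar lamBar muBar⟫ = ⟪F hbar - F hstar, hbar - hstar⟫
      + (⟪lamBar - lamStar, q hbar⟫ - ⟪lamBar - lamStar, q hstar⟫)
      + ⟪muBar - muStar, l hbar⟫ := by
    rw [e3, inner_add_right, inner_add_right, ContinuousLinearMap.adjoint_inner_right,
      ContinuousLinearMap.adjoint_inner_right, e2, ← e1, ← inner_sub_right,
      real_inner_comm (F hbar - F hstar), real_inner_comm (lamBar - lamStar),
      real_inner_comm (muBar - muStar)]
  have h2 : ⟪lamBar - lamStar, qplus⟫ ≤ ⟪lamBar - lamStar, q hbar⟫ := by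
    simp only [PiLp.inner_apply]
    apply Finset.sum_le_sum
    intro j _
    simp only [RCLike.inner_apply, conj_trivial, PiLp.sub_apply, hqplus]
    split_ifs with h
    · exact le_rfl
    · have h0 : lamBar j = 0 := le_antisymm (not_lt.mp h) (hlamBar j)
      rw [h0]
      nlinarith [hlamStar j, le_max_left (q hbar j) 0]
  have h3 : ⟪lamBar - lamStar, q hstar⟫ ≤ 0 := by
    rw [inner_sub_left, hcomp, sub_zero]
    simp only [PiLp.inner_apply]
    apply Finset.sum_nonpos
    intro j _
    simp only [RCLike.inner_apply, conj_trivial]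
    nlinarith [hlamBar j, hq0 j]
  rw [e4]
  linarith
end

section
/- Let F: ℝⁿ → ℝⁿ be strongly monotone with constant c_F > 0, let q: ℝⁿ → ℝˢ and l: ℝⁿ → ℝᵗ be affine maps with (constant) Jacobians Dq and Dl, and define H(h, λ, μ) := F(h) + Dqᵀλ + Dlᵀμ. Let (h*, λ*, μ*) ∈ ℝⁿ × ℝˢ × ℝᵗ be a KKT point, i.e., H(h*, λ*, μ*) = 0, l(h*) = 0, q(h*) ≤ 0 componentwise, λ* ≥ 0 componentwise, and (λ*)ᵀq(h*) = 0. Then for all h̄ ∈ ℝⁿ, all λ̄ ∈ ℝˢ with λ̄ ≥ 0 componentwise, and all μ̄ ∈ ℝᵗ, one has −2(h̄ − h*)ᵀ H(h̄, λ̄, μ̄) + 2(λ̄ − λ*)ᵀ [q(h̄)]_{λ̄}⁺ + 2(μ̄ − μ*)ᵀ l(h̄) ≤ −2 c_F ‖h̄ − h*‖². -/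
open RealInnerProductSpace

/-- Bound on the Lie derivative of the Lyapunov function in the
multiplier-driven algorithm analysis, under strong monotonicity: at a KKT
point `(h*, λ*, μ*)`, for all `h̄`, `λ̄ ≥ 0`, `μ̄`:
`-2⟪h̄ - h*, H(h̄, λ̄, μ̄)⟫ + 2⟪λ̄ - λ*, [q h̄]_{λ̄}⁺⟫ + 2⟪μ̄ - μ*, l h̄⟫ ≤ -2 c_F ‖h̄ - h*‖²`. -/
theorem multiplier_lie_derivative_neg_strong {n s t : ℕ}
    (F : EuclideanSpace ℝ (Fin n) → EuclideanSpace ℝ (Fin n))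
    (cF : ℝ) (hcF : 0 < cF)
    (hmono : ∀ x y, cF * ‖x - y‖ ^ 2 ≤ ⟪F x - F y, x - y⟫)
    (Dq : EuclideanSpace ℝ (Fin n) →L[ℝ] EuclideanSpace ℝ (Fin s))
    (q0 : EuclideanSpace ℝ (Fin s))
    (Dl : EuclideanSpace ℝ (Fin n) →L[ℝ] EuclideanSpace ℝ (Fin t))
    (l0 : EuclideanSpace ℝ (Fin t))
    (q : EuclideanSpace ℝ (Fin n) → EuclideanSpace ℝ (Fin s))
    (hq : ∀ h, q h = Dq h + q0)
    (l : EuclideanSpace ℝ (Fin n) → EuclideanSpace ℝ (Fin t))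
    (hl : ∀ h, l h = Dl h + l0)
    (H : EuclideanSpace ℝ (Fin n) → EuclideanSpace ℝ (Fin s) →
      EuclideanSpace ℝ (Fin t) → EuclideanSpace ℝ (Fin n))
    (hH : ∀ h lam mu, H h lam mu =
      F h + ContinuousLinearMap.adjoint Dq lam + ContinuousLinearMap.adjoint Dl mu)
    (hstar : EuclideanSpace ℝ (Fin n)) (lamStar : EuclideanSpace ℝ (Fin s))
    (muStar : EuclideanSpace ℝ (Fin t))
    (hstat : H hstar lamStar muStar = 0)
    (hl0 : l hstar = 0)
    (hq0 : ∀ j, q hstar j ≤ 0)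
    (hlamStar : ∀ j, 0 ≤ lamStar j)
    (hcomp : ⟪lamStar, q hstar⟫ = 0)
    (hbar : EuclideanSpace ℝ (Fin n))
    (lamBar : EuclideanSpace ℝ (Fin s)) (hlamBar : ∀ j, 0 ≤ lamBar j)
    (muBar : EuclideanSpace ℝ (Fin t))
    (qplus : EuclideanSpace ℝ (Fin s))
    (hqplus : ∀ j, qplus j = if 0 < lamBar j then q hbar j else max (q hbar j) 0) :
    -2 * ⟪hbar - hstar, H hbar lamBar muBar⟫
      + 2 * ⟪lamBar - lamStar, qplus⟫ + 2 * ⟪muBar - muStar, l hbar⟫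
      ≤ -2 * cF * ‖hbar - hstar‖ ^ 2 := by
  have e1 : ⟪hbar - hstar, H hbar lamBar muBar⟫ =
      ⟪F hbar - F hstar, hbar - hstar⟫ + ⟪lamBar - lamStar, q hbar - q hstar⟫
        + ⟪muBar - muStar, l hbar⟫ := by
    have a : H hbar lamBar muBar = (F hbar - F hstar)
        + ContinuousLinearMap.adjoint Dq (lamBar - lamStar)
        + ContinuousLinearMap.adjoint Dl (muBar - muStar) := by
      rw [← sub_zero (H hbar lamBar muBar), ← hstat, hH, hH, map_sub, map_sub]
      abel
    have b : q hbar - q hstar = Dq (hbar - hstar) := by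
      rw [hq, hq, map_sub]; abel
    have c : l hbar = Dl (hbar - hstar) := by
      rw [← sub_zero (l hbar), ← hl0, hl, hl, map_sub]; abel
    rw [a, b, c, inner_add_right, inner_add_right, ContinuousLinearMap.adjoint_inner_right,
      ContinuousLinearMap.adjoint_inner_right, real_inner_comm (F hbar - F hstar),
      real_inner_comm (lamBar - lamStar), real_inner_comm (muBar - muStar)]
  have e2 : ⟪lamBar - lamStar, qplus⟫ ≤ ⟪lamBar - lamStar, q hbar⟫ := by
    simp only [PiLp.inner_apply]
    refine Finset.sum_le_sum fun j _ => ?_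
    have h1 := hlamStar j
    have h2 := hlamBar j
    simp only [PiLp.sub_apply, RCLike.inner_apply, conj_trivial, hqplus]
    split_ifs with h
    · exact le_rfl
    · have h3 : lamBar j = 0 := le_antisymm (not_lt.mp h) h2
      rw [h3]
      nlinarith [mul_le_mul_of_nonneg_right (le_max_left (q hbar j) 0) h1]
  have e3 : ⟪lamBar, q hstar⟫ ≤ 0 := by
    simp only [PiLp.inner_apply]
    refine Finset.sum_nonpos fun j _ => ?_
    simp only [RCLike.inner_apply, conj_trivial]
    exact mul_nonpos_of_nonpos_of_nonneg (hq0 j) (hlamBar j)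
  have e4 : ⟪lamBar - lamStar, q hbar - q hstar⟫ =
      ⟪lamBar - lamStar, q hbar⟫ - ⟪lamBar, q hstar⟫ := by
    rw [inner_sub_right, inner_sub_left lamBar lamStar (q hstar), hcomp, sub_zero]
  have e5 := hmono hbar hstar
  rw [e1, e4]
  linarith
end

section
/- Let P be a finite set of paths partitioned into nonempty subsets P_w indexed by a finite set W of origin-destination pairs, let d_w ≥ 0 for each w ∈ W, and let H = { h ∈ ℝ^P : h_p ≥ 0 for all p ∈ P, and Σ_{p ∈ P_w} h_p = d_w for all w ∈ W }. Let F: ℝ^P → ℝ^P be any map. Then a point h* ∈ H satisfies the Wardrop equilibrium conditions — for every w ∈ W and every p ∈ P_w with h*_p > 0, F_p(h*) ≤ F_q(h*) for all q ∈ P_w — if and only if h* solves VI(F, H). -/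
open RealInnerProductSpace

/-- Equivalence of Wardrop equilibria and solutions of the variational
inequality `VI(F, H)` over the feasible flow set
`H = {h | h ≥ 0, ∑_{p ∈ P_w} h_p = d_w}` of a routing game: a feasible flow
`h*` satisfies the Wardrop conditions iff `h*` solves `VI(F, H)`. -/
theorem wardrop_iff_VI {P W : Type*} [Fintype P] [Fintype W] [DecidableEq W]
    (r : P → W) (hr : Function.Surjective r)
    (d : W → ℝ) (hd : ∀ w, 0 ≤ d w)
    (F : EuclideanSpace ℝ P → EuclideanSpace ℝ P)
    (hstar : EuclideanSpace ℝ P)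
    (hmem : (∀ p, 0 ≤ hstar p) ∧
      ∀ w, ∑ p ∈ Finset.univ.filter (fun p => r p = w), hstar p = d w) :
    (∀ p, 0 < hstar p → ∀ q, r q = r p → F hstar p ≤ F hstar q) ↔
      (∀ h : EuclideanSpace ℝ P,
        ((∀ p, 0 ≤ h p) ∧
          ∀ w, ∑ p ∈ Finset.univ.filter (fun p => r p = w), h p = d w) →
        0 ≤ ⟪h - hstar, F hstar⟫) := by
  classical
  have inner_eq : ∀ h : EuclideanSpace ℝ P,
      ⟪h - hstar, F hstar⟫ = ∑ p, (h p - hstar p) * F hstar p := by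
    intro h
    simp [PiLp.inner_apply, mul_comm]
  constructor
  · intro hW h hh
    rw [inner_eq]
    have hm : ∀ w, ∃ p, r p = w ∧ ∀ q, r q = w → F hstar p ≤ F hstar q := by
      intro w
      obtain ⟨p0, hp0⟩ := hr w
      obtain ⟨p, hp, hmin⟩ := Finset.exists_min_image
        (Finset.univ.filter (fun p => r p = w)) (fun p => F hstar p) ⟨p0, by simp [hp0]⟩
      exact ⟨p, by simpa using hp, fun q hq => hmin q (by simp [hq])⟩
    choose m hm1 hm2 using hm
    have h0 : ∑ p, (h p - hstar p) * F hstar (m (r p)) = 0 := by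
      rw [← Finset.sum_fiberwise Finset.univ r]
      refine Finset.sum_eq_zero fun w _ => ?_
      have : ∑ p ∈ Finset.univ.filter (fun p => r p = w),
          (h p - hstar p) * F hstar (m (r p)) =
          ∑ p ∈ Finset.univ.filter (fun p => r p = w), (h p - hstar p) * F hstar (m w) := by
        refine Finset.sum_congr rfl fun p hp => ?_
        rw [(Finset.mem_filter.mp hp).2]
      rw [this, ← Finset.sum_mul, Finset.sum_sub_distrib, hh.2 w, hmem.2 w]
      simp
    rw [← h0]
    refine Finset.sum_le_sum fun p _ => ?_
    have h1 := hm2 (r p) p rfl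
    rcases (hmem.1 p).lt_or_eq with hp | hp
    · rw [le_antisymm h1 (hW p hp _ (hm1 (r p)))]
    · rw [← hp, sub_zero]
      exact mul_le_mul_of_nonneg_left h1 (hh.1 p)
  · intro hV p hp q hq
    by_cases hqp : q = p
    · rw [hqp]
    let h : EuclideanSpace ℝ P := WithLp.toLp 2 fun x =>
      hstar x + ((if x = q then hstar p else 0) - (if x = p then hstar p else 0))
    have hx : ∀ x, h x =
      hstar x + ((if x = q then hstar p else 0) - (if x = p then hstar p else 0)) :=
      fun _ => rfl
    have key := hV h ⟨?_, ?_⟩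
    · rw [inner_eq] at key
      simp only [hx, add_sub_cancel_left, sub_mul, ite_mul, zero_mul,
        Finset.sum_sub_distrib, Finset.sum_ite_eq', Finset.sum_ite_eq, Finset.mem_univ,
        if_true] at key
      exact le_of_mul_le_mul_left (by linarith) hp
    · intro x
      rw [hx]
      have := hmem.1 x
      by_cases h1 : x = p
      · subst h1
        simp [Ne.symm hqp]
      · simp only [h1, if_false]
        split_ifs <;> linarith
    · intro w
      simp only [hx, Finset.sum_add_distrib, Finset.sum_sub_distrib, hmem.2 w,
        Finset.sum_ite_eq', Finset.mem_filter, Finset.mem_univ, true_and, hq]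
      simp
end
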